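/- Let $-\frac{3}{2} < c < 0$ and let $E^u$ be the unique real root of $2E(c-E)^2 + 1 = 0$. Then every real $E < 0$ with $2E(E-c)^2 + 1 \ge 0$ satisfies $-2 < E^u \le E < 0$, and setting $L := E - c$ one has $-\frac{1}{\sqrt[3]{2}} < E^u - c \le L < -c$. -/

import Mathlib

/-!
For fixed `r`, the difference quotient of `x ↦ x (x - c)²` between `r` and `x` is a quadratic
polynomial in `x` of discriminant `-r (3r - 4c)`. For a root `r = Eᵘ` of `2E(E - c)² + 1` with
`c > -3/2` this discriminant is negative, because `r < 0` and `3r < 4c`. Hence `2E(E - c)² + 1`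
changes sign exactly once, at `Eᵘ`, and every bound on `Eᵘ` reduces to the sign of this cubic
at one point.
-/

section Cubic

variable {R : Type*} [CommRing R] [LinearOrder R] [IsStrictOrderedRing R] {c r : R}

lemma three_mul_lt_four_mul_of_mul_sub_sq_lt (h : 27 * (r * (r - c) ^ 2) < 4 * c ^ 3) :
    3 * r < 4 * c := by
  have factorization :
      27 * (r * (r - c) ^ 2) - 4 * c ^ 3 = (3 * r - c) ^ 2 * (3 * r - 4 * c) := by ring
  have product_neg : (3 * r - c) ^ 2 * (3 * r - 4 * c) < 0 := factorization ▸ sub_neg.mpr h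
  exact sub_neg.mp (neg_of_mul_neg_right product_neg (sq_nonneg _))

lemma mul_sub_sq_le_mul_sub_sq_iff (hr : r < 0) (hrc : 3 * r < 4 * c) (x : R) :
    r * (r - c) ^ 2 ≤ x * (x - c) ^ 2 ↔ r ≤ x := by
  have factorization : 4 * (x * (x - c) ^ 2 - r * (r - c) ^ 2) =
      ((2 * x + r - 2 * c) ^ 2 + r * (3 * r - 4 * c)) * (x - r) := by ring
  have quotient_pos : 0 < (2 * x + r - 2 * c) ^ 2 + r * (3 * r - 4 * c) :=
    add_pos_of_nonneg_of_pos (sq_nonneg _) (mul_pos_of_neg_of_neg hr (sub_neg.mpr hrc))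
  rw [← sub_nonneg, ← mul_nonneg_iff_of_pos_left (zero_lt_four' R), factorization,
    mul_nonneg_iff_of_pos_left quotient_pos, sub_nonneg]

end Cubic

/-- The squared eccentricity of a Kepler orbit of energy `E` on the level `H = c` of the rotating
Kepler Hamiltonian `H = E - L`, where the angular momentum is `L = E - c`. The formula is taken
for all real `E`, so its value may be negative where no orbit exists. -/
def eccentricitySq (c E : ℝ) : ℝ := 2 * E * (E - c) ^ 2 + 1

section EccentricitySq

variable {c E Eu t : ℝ}

lemma neg_of_eccentricitySq_lt_one (h : eccentricitySq c E < 1) : E < 0 := by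
  have product_neg : E * (E - c) ^ 2 < 0 := by
    unfold eccentricitySq at h
    linarith
  exact neg_of_mul_neg_left product_neg (sq_nonneg _)

lemma three_mul_lt_four_mul_of_eccentricitySq_nonpos (hc : -(3 / 2) < c)
    (h : eccentricitySq c E ≤ 0) : 3 * E < 4 * c := by
  have cube_lt : (-(3 / 2)) ^ 3 < c ^ 3 := Odd.strictMono_pow (by decide) hc
  apply three_mul_lt_four_mul_of_mul_sub_sq_lt
  unfold eccentricitySq at h
  linarith

lemma eccentricitySq_nonneg_iff (hc : -(3 / 2) < c) (hEu : eccentricitySq c Eu = 0) :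
    0 ≤ eccentricitySq c E ↔ Eu ≤ E := by
  have Eu_neg : Eu < 0 := neg_of_eccentricitySq_lt_one (hEu.trans_lt one_pos)
  have Eu_lt : 3 * Eu < 4 * c := three_mul_lt_four_mul_of_eccentricitySq_nonpos hc hEu.le
  rw [← hEu, ← mul_sub_sq_le_mul_sub_sq_iff Eu_neg Eu_lt E]
  simp only [eccentricitySq, mul_assoc, add_le_add_iff_right, mul_le_mul_iff_right₀ two_pos]

lemma eccentricitySq_neg_iff (hc : -(3 / 2) < c) (hEu : eccentricitySq c Eu = 0) :
    eccentricitySq c E < 0 ↔ E < Eu := by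
  simpa only [not_le] using (eccentricitySq_nonneg_iff (E := E) hc hEu).not

lemma eccentricitySq_neg_two_lt_zero (hc : -(3 / 2) < c) : eccentricitySq c (-2) < 0 := by
  calc
    eccentricitySq c (-2) = -((2 * c + 3) * (2 * c + 5)) := by unfold eccentricitySq; ring
    _ < 0 := neg_neg_of_pos (mul_pos (by linarith) (by linarith))

lemma eccentricitySq_sub_lt_zero (hc : c < 0) (ht : 1 / 2 ≤ t ^ 3) :
    eccentricitySq c (c - t) < 0 := by
  have t_ne_zero : t ≠ 0 := by
    rintro rfl
    norm_num at ht
  have product_neg : c * t ^ 2 < 0 := mul_neg_of_neg_of_pos hc (by positivity)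
  calc
    eccentricitySq c (c - t) = 2 * (c * t ^ 2) + (1 - 2 * t ^ 3) := by unfold eccentricitySq; ring
    _ < 0 := by linarith

end EccentricitySq

lemma two_rpow_neg_one_third_pow_three : ((2 : ℝ) ^ (-(1 / 3) : ℝ)) ^ 3 = 1 / 2 := by
  rw [← Real.rpow_mul_natCast zero_le_two]
  norm_num [Real.rpow_neg_one]

/-- Lemma 3.1 of the paper for `-3/2 < c < 0`: with `Eᵘ` the unique root of
`2E(c-E)² + 1 = 0`, every `E < 0` with `2E(E-c)² + 1 ≥ 0` satisfies `-2 < Eᵘ ≤ E < 0`,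
and `L := E - c` satisfies `-2^(-1/3) < Eᵘ - c ≤ L < -c`. -/
theorem stmt_4 (c Eu : ℝ) (hc1 : -(3 / 2) < c) (hc2 : c < 0)
    (hEu : 2 * Eu * (c - Eu) ^ 2 + 1 = 0)
    (hEuUnique : ∀ E' : ℝ, 2 * E' * (c - E') ^ 2 + 1 = 0 → E' = Eu) :
    ∀ E : ℝ, E < 0 → 0 ≤ 2 * E * (E - c) ^ 2 + 1 →
      -2 < Eu ∧ Eu ≤ E ∧ E < 0 ∧
      -(2 : ℝ) ^ (-(1 / 3) : ℝ) < Eu - c ∧ Eu - c ≤ E - c ∧ E - c < -c := by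
  intro E E_neg eccentricitySq_nonneg
  have root : eccentricitySq c Eu = 0 := by rwa [eccentricitySq, sub_sq_comm]
  have neg_two_lt : -2 < Eu :=
    (eccentricitySq_neg_iff hc1 root).mp (eccentricitySq_neg_two_lt_zero hc1)
  have Eu_le : Eu ≤ E := (eccentricitySq_nonneg_iff hc1 root).mp eccentricitySq_nonneg
  have sub_cbrt_lt : c - (2 : ℝ) ^ (-(1 / 3) : ℝ) < Eu :=
    (eccentricitySq_neg_iff hc1 root).mp
      (eccentricitySq_sub_lt_zero hc2 two_rpow_neg_one_third_pow_three.ge)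
  exact ⟨neg_two_lt, Eu_le, E_neg, by linarith, by linarith, by linarith⟩
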